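/- arXiv:2309.02439 — 5 statements merged into one kernel-verified Lean document; each statement's English description precedes it below -/
import Mathlib

section
/- Let μ > 0, c ∈ ℝ, x₀ ∈ ℝ and set k = 1/(2√μ). Then the function U : ℝ × ℝ → ℝ defined by U(x,t) = 3c · sech²(k(x − x₀ − c·t)) is a classical solution of the Equal Width (EW) equation, i.e. for all (x,t) ∈ ℝ × ℝ one has ∂ₜU(x,t) + U(x,t)·∂ₓU(x,t) − μ·∂ₓ∂ₓ∂ₜU(x,t) = 0. -/
open Real

/-- The derivative of a power of the hyperbolic secant of a function. -/
theorem HasDerivAt.one_div_cosh_pow {u : ℝ → ℝ} {u' x : ℝ} (hu : HasDerivAt u u' x) (n : ℕ) :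
    HasDerivAt (fun y => (1 / Real.cosh (u y)) ^ n)
      (-n * Real.sinh (u x) * (1 / Real.cosh (u x)) ^ (n + 1) * u') x := by
  have hc : Real.cosh (u x) ≠ 0 := (Real.cosh_pos _).ne'
  simp only [one_div]
  refine ((hu.cosh.fun_inv hc).fun_pow n).congr_deriv ?_
  cases n with
  | zero => simp
  | succ m =>
    rw [Nat.add_sub_cancel, div_eq_mul_inv, ← inv_pow]
    ring

/-- The derivative of `sinh · sech³`, expressed in powers of `sech`. -/
theorem HasDerivAt.sinh_mul_one_div_cosh_cube {u : ℝ → ℝ} {u' x : ℝ} (hu : HasDerivAt u u' x) :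
    HasDerivAt (fun y => Real.sinh (u y) * (1 / Real.cosh (u y)) ^ 3)
      ((3 * (1 / Real.cosh (u x)) ^ 4 - 2 * (1 / Real.cosh (u x)) ^ 2) * u') x := by
  have hc : Real.cosh (u x) ≠ 0 := (Real.cosh_pos _).ne'
  refine (hu.sinh.fun_mul (hu.one_div_cosh_pow 3)).congr_deriv ?_
  push_cast
  field_simp
  linear_combination (3 * u') * Real.cosh_sq (u x)

/-- The solitary wave `U(x,t) = 3c·sech²(k(x − x₀ − c·t))` with `k = 1/(2√μ)` is a
classical solution of the Equal Width equation `Uₜ + U·Uₓ − μ·U_{xxt} = 0`. -/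
theorem ew_single_solitary_wave_solution
    (μ c x₀ : ℝ) (hμ : 0 < μ) (k : ℝ) (hk : k = 1 / (2 * Real.sqrt μ))
    (U : ℝ → ℝ → ℝ)
    (hU : ∀ x t, U x t = 3 * c * (1 / Real.cosh (k * (x - x₀ - c * t))) ^ 2) :
    ∀ x t : ℝ,
      deriv (fun s => U x s) t
        + U x t * deriv (fun y => U y t) x
        - μ * deriv (fun y => deriv (fun z => deriv (fun s => U z s) t) y) x = 0 := by
  intro x t
  have hkμ : 4 * μ * k ^ 2 = 1 := by
    rw [hk, div_pow, mul_pow, Real.sq_sqrt hμ.le]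
    field_simp
    norm_num
  have hx (y : ℝ) : HasDerivAt (fun z => k * (z - x₀ - c * t)) k y := by
    simpa using (((hasDerivAt_id y).sub_const x₀).sub_const (c * t)).const_mul k
  have ht (z : ℝ) : HasDerivAt (fun s => k * (z - x₀ - c * s)) (-(k * c)) t := by
    simpa using (((hasDerivAt_id t).const_mul c).const_sub (z - x₀)).const_mul k
  have hUt (z : ℝ) : deriv (fun s => U z s) t = 6 * c ^ 2 * k *
      (Real.sinh (k * (z - x₀ - c * t)) * (1 / Real.cosh (k * (z - x₀ - c * t))) ^ 3) := by
    simp only [hU]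
    rw [(((ht z).one_div_cosh_pow 2).const_mul (3 * c)).deriv]
    push_cast
    ring
  have hUx := (((hx x).one_div_cosh_pow 2).const_mul (3 * c)).deriv
  have hUxt (y : ℝ) := ((hx y).sinh_mul_one_div_cosh_cube.const_mul (6 * c ^ 2 * k)).deriv
  have hUxxt := (((((hx x).one_div_cosh_pow 4).const_mul 3).fun_sub
    (((hx x).one_div_cosh_pow 2).const_mul 2)).mul_const k |>.const_mul (6 * c ^ 2 * k)).deriv
  simp only [hUt, hUxt, hUxxt]
  simp only [hU, hUx]
  push_cast
  generalize Real.sinh (k * (x - x₀ - c * t)) = S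
  generalize 1 / Real.cosh (k * (x - x₀ - c * t)) = q
  linear_combination (6 * c ^ 2 * k * S * (3 * q ^ 5 - q ^ 3)) * hkμ
end

section
/- Let c ∈ ℝ, x₀ ∈ ℝ, k > 0 and μ ∈ ℝ, and let U₀(x) = 3c · sech²(k(x − x₀)). Then ∫_{−∞}^{∞} ( U₀(x)² + μ·(U₀′(x))² ) dx = 12c²/k + (48/5)·k·c²·μ, where U₀′ denotes the derivative of U₀. -/
open Real MeasureTheory

open Filter Topology

lemma one_sub_tanh_sq (x : ℝ) : 1 - tanh x ^ 2 = (1 / cosh x) ^ 2 := by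
  have h := (cosh_pos x).ne'
  rw [tanh_eq_sinh_div_cosh]
  field_simp
  linarith [cosh_sq x]

lemma hasDerivAt_tanh (x : ℝ) : HasDerivAt tanh (1 - tanh x ^ 2) x := by
  have h := (cosh_pos x).ne'
  have hquot := (hasDerivAt_sinh x).div (hasDerivAt_cosh x) h
  have hfun : tanh = sinh / cosh := funext tanh_eq_sinh_div_cosh
  rw [tanh_eq_sinh_div_cosh, hfun]
  refine hquot.congr_deriv ?_
  field_simp

lemma continuous_tanh : Continuous tanh :=
  continuous_iff_continuousAt.2 fun x => (hasDerivAt_tanh x).continuousAt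

lemma tendsto_tanh_atTop : Tendsto tanh atTop (𝓝 1) := by
  have hfun : tanh = fun x => 1 - 2 / (exp (2 * x) + 1) := by
    funext x
    have h1 : exp (2 * x) = exp x * exp x := by rw [← exp_add]; ring_nf
    have h2 := exp_pos x
    rw [tanh_eq, exp_neg, h1]
    field_simp
    ring
  rw [hfun]
  have hexp : Tendsto (fun x : ℝ => exp (2 * x) + 1) atTop atTop :=
    tendsto_atTop_add_const_right _ _
      (tendsto_exp_atTop.comp (tendsto_id.const_mul_atTop two_pos))
  simpa using (hexp.const_div_atTop 2).const_sub 1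

lemma tendsto_tanh_atBot : Tendsto tanh atBot (𝓝 (-1)) := by
  simpa [Function.comp_def] using (tendsto_tanh_atTop.comp tendsto_neg_atBot_atTop).neg

lemma integrable_one_sub_tanh_sq : Integrable fun x => 1 - tanh x ^ 2 := by
  have hcont : Continuous fun x => 1 - tanh x ^ 2 := by
    have := continuous_tanh
    fun_prop
  refine integrable_of_intervalIntegral_norm_tendsto (l := atTop) (a := fun y : ℝ => -y)
    (b := id) (1 - -1) (fun y => hcont.integrableOn_Ioc) tendsto_neg_atTop_atBot tendsto_id ?_
  have h_int (y : ℝ) : ∫ x in -y..id y, ‖1 - tanh x ^ 2‖ = tanh y - tanh (-y) := by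
    simp_rw [norm_of_nonneg (sub_nonneg.2 (tanh_sq_lt_one _).le)]
    exact intervalIntegral.integral_eq_sub_of_hasDerivAt (fun x _ => hasDerivAt_tanh x)
      (hcont.intervalIntegrable _ _)
  simp_rw [h_int]
  exact tendsto_tanh_atTop.sub (tendsto_tanh_atBot.comp tendsto_neg_atTop_atBot)

/-- The substitution `t = tanh x` on the whole real line. -/
lemma integral_comp_tanh_mul {g : ℝ → ℝ} (hg : Continuous g) :
    ∫ x, g (tanh x) * (1 - tanh x ^ 2) = ∫ t in (-1)..1, g t := by
  have hG (t : ℝ) : HasDerivAt (fun u => ∫ s in (0)..u, g s) (g t) t :=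
    hg.integral_hasStrictDerivAt 0 t |>.hasDerivAt
  obtain ⟨C, hC⟩ := (isCompact_Icc (a := (-1 : ℝ)) (b := 1)).exists_bound_of_continuousOn
    hg.continuousOn
  have h_int : Integrable fun x => g (tanh x) * (1 - tanh x ^ 2) :=
    integrable_one_sub_tanh_sq.bdd_mul (hg.comp continuous_tanh).aestronglyMeasurable
      (.of_forall fun x => hC _ ⟨(neg_one_lt_tanh x).le, (tanh_lt_one x).le⟩)
  rw [integral_of_hasDerivAt_of_tendsto (fun x => (hG (tanh x)).comp x (hasDerivAt_tanh x)) h_int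
    ((hG (-1)).continuousAt.tendsto.comp tendsto_tanh_atBot)
    ((hG 1).continuousAt.tendsto.comp tendsto_tanh_atTop)]
  exact intervalIntegral.integral_interval_sub_left (hg.intervalIntegrable _ _)
    (hg.intervalIntegrable _ _)

/-- The second invariant of the EW equation on the solitary-wave profile
`U₀(x) = 3c·sech²(k(x−x₀))`: `∫ (U₀² + μ·U₀′²) dx = 12c²/k + (48/5)kc²μ`. -/
theorem ew_second_invariant_solitary_wave
    (c x₀ k μ : ℝ) (hk : 0 < k)
    (U₀ : ℝ → ℝ)
    (hU₀ : ∀ x, U₀ x = 3 * c * (1 / Real.cosh (k * (x - x₀))) ^ 2) :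
    ∫ x : ℝ, (U₀ x ^ 2 + μ * (deriv U₀ x) ^ 2)
      = 12 * c ^ 2 / k + (48 / 5) * k * c ^ 2 * μ := by
  have hU : U₀ = fun x => 3 * c * (1 - tanh (k * (x - x₀)) ^ 2) := by
    funext x
    rw [hU₀, one_sub_tanh_sq]
  have hderiv (x : ℝ) : deriv U₀ x =
      -6 * c * k * tanh (k * (x - x₀)) * (1 - tanh (k * (x - x₀)) ^ 2) := by
    have hlin : HasDerivAt (fun y => k * (y - x₀)) (k * 1) x :=
      ((hasDerivAt_id x).sub_const x₀).const_mul k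
    have htanh := (hasDerivAt_tanh (k * (x - x₀))).comp x hlin
    rw [hU]
    refine (((htanh.pow 2).const_sub 1).const_mul (3 * c)).deriv.trans ?_
    simp only [Function.comp_apply]
    ring
  let g : ℝ → ℝ := fun t =>
    9 * c ^ 2 * (1 - t ^ 2) + 36 * c ^ 2 * k ^ 2 * μ * (t ^ 2 - t ^ 4)
  have hg : Continuous g := by fun_prop
  have h_int : ∫ t in (-1)..1, g t = 12 * c ^ 2 + 48 / 5 * k ^ 2 * c ^ 2 * μ := by
    have hprim (t : ℝ) : HasDerivAt (fun t => 9 * c ^ 2 * (t - t ^ 3 / 3) +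
        36 * c ^ 2 * k ^ 2 * μ * (t ^ 3 / 3 - t ^ 5 / 5)) (g t) t := by
      have h3 := (hasDerivAt_pow 3 t).div_const 3
      have h5 := (hasDerivAt_pow 5 t).div_const 5
      convert! (((hasDerivAt_id t).sub h3).const_mul (9 * c ^ 2)).add
        ((h3.sub h5).const_mul (36 * c ^ 2 * k ^ 2 * μ)) using 1
      simp only [g]
      norm_num
    rw [intervalIntegral.integral_eq_sub_of_hasDerivAt (fun t _ => hprim t)
      (hg.intervalIntegrable _ _)]
    ring
  let F : ℝ → ℝ := fun y => g (tanh y) * (1 - tanh y ^ 2)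
  have hF (x : ℝ) : U₀ x ^ 2 + μ * deriv U₀ x ^ 2 = F (k * (x - x₀)) := by
    rw [hderiv, hU]
    simp only [F, g]
    ring
  simp_rw [hF]
  rw [integral_sub_right_eq_self (fun x => F (k * x)) x₀, Measure.integral_comp_mul_left,
    integral_comp_tanh_mul hg, h_int, abs_of_pos (inv_pos.2 hk), smul_eq_mul]
  field_simp
end

section
/- Let μ ∈ ℝ and let U : ℝ × ℝ → ℝ be a smooth solution of the EW equation ∂ₜU + U·∂ₓU − μ·∂ₓ∂ₓ∂ₜU = 0. Fix t ∈ ℝ and assume: (i) the functions x ↦ ∂ₜU(x,t), x ↦ ∂ₓ∂ₓ∂ₜU(x,t) and x ↦ U(x,t)²·∂ₜU(x,t) are integrable on ℝ; (ii) U(x,t), ∂ₜU(x,t) and ∂ₓ∂ₜU(x,t) all tend to 0 as x → ±∞; (iii) the antiderivative g(x) = ∫_{−∞}^{x} ( ∂ₜU(y,t) − μ·∂ₓ∂ₓ∂ₜU(y,t) ) dy satisfies g(x) = −U(x,t)²/2 for all x. Then ∫_{−∞}^{∞} 3·U(x,t)²·∂ₜU(x,t) dx = 0, i.e. the third invariant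 I₃ = ∫ U³ dx has zero rate of change at time t. -/
open Real MeasureTheory Filter

/-- The partial derivative in the second variable of a smooth function of two real variables,
restricted to a horizontal line, is smooth. -/
theorem contDiff_deriv_snd {U : ℝ → ℝ → ℝ}
    (hU : ContDiff ℝ (⊤ : ℕ∞) (fun p : ℝ × ℝ => U p.1 p.2)) (t : ℝ) :
    ContDiff ℝ (⊤ : ℕ∞) (fun x => deriv (fun s => U x s) t) := by
  have h : ContDiff ℝ (⊤ : ℕ∞) (fun x => fderiv ℝ (fun s => U x s) t 1) :=
    (ContDiff.fderiv (n := (⊤ : ℕ∞)) (f := U) (g := fun _ => t) hU contDiff_const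
      (by simp)).clm_apply contDiff_const
  simpa only [fderiv_apply_one_eq_deriv] using h

/-- For a smooth solution of the EW equation with suitable decay at spatial infinity,
the third invariant `I₃ = ∫ U³ dx` has zero rate of change:
`∫ 3U²·Uₜ dx = 0`. -/
theorem ew_third_invariant_rate_zero
    (μ : ℝ) (U : ℝ → ℝ → ℝ)
    (hreg : ContDiff ℝ (⊤ : ℕ∞) (fun p : ℝ × ℝ => U p.1 p.2))
    (hEW : ∀ x t : ℝ,
      deriv (fun s => U x s) t
        + U x t * deriv (fun y => U y t) x
        - μ * deriv (fun y => deriv (fun z => deriv (fun s => U z s) t) y) x = 0)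
    (t : ℝ)
    (hint₁ : Integrable (fun x => deriv (fun s => U x s) t))
    (hint₂ : Integrable (fun x =>
      deriv (fun y => deriv (fun z => deriv (fun s => U z s) t) y) x))
    (hint₃ : Integrable (fun x => (U x t) ^ 2 * deriv (fun s => U x s) t))
    (hUTop : Tendsto (fun x => U x t) atTop (nhds 0))
    (hUBot : Tendsto (fun x => U x t) atBot (nhds 0))
    (hUtTop : Tendsto (fun x => deriv (fun s => U x s) t) atTop (nhds 0))
    (hUtBot : Tendsto (fun x => deriv (fun s => U x s) t) atBot (nhds 0))
    (hUxtTop : Tendsto (fun x => deriv (fun z => deriv (fun s => U z s) t) x)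
      atTop (nhds 0))
    (hUxtBot : Tendsto (fun x => deriv (fun z => deriv (fun s => U z s) t) x)
      atBot (nhds 0))
    (hg : ∀ x : ℝ,
      (∫ y in Set.Iic x,
        (deriv (fun s => U y s) t
          - μ * deriv (fun y' => deriv (fun z => deriv (fun s => U z s) t) y') y))
        = -(U x t) ^ 2 / 2) :
    ∫ x : ℝ, 3 * (U x t) ^ 2 * deriv (fun s => U x s) t = 0 := by
  have hv : ContDiff ℝ (⊤ : ℕ∞) (fun x => deriv (fun s => U x s) t) := contDiff_deriv_snd hreg t
  have hU : Differentiable ℝ (fun x => U x t) :=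
    (hreg.comp (contDiff_id.prodMk contDiff_const)).differentiable (by simp)
  have hEWt := fun x => hEW x t
  set v : ℝ → ℝ := fun x => deriv (fun s => U x s) t
  have hv' : Differentiable ℝ (deriv v) :=
    (contDiff_infty_iff_deriv.1 hv).2.differentiable (by simp)
  -- `-U² / 2 + μ vₓ` is an antiderivative of `v = Uₜ`, by the EW equation.
  have hV : ∀ x, HasDerivAt (fun x => -(U x t) ^ 2 / 2 + μ * deriv v x) (v x) x := by
    intro x
    refine ((((hU x).hasDerivAt.pow 2).neg.div_const 2).add
      ((hv' x).hasDerivAt.const_mul μ)).congr_deriv ?_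
    have h := hEWt x
    change v x + _ - μ * deriv (deriv v) x = 0 at h
    norm_num
    linarith
  have hW : ∀ x, HasDerivAt
      (fun x => 3 * (μ * v x ^ 2 - (-(U x t) ^ 2 / 2 + μ * deriv v x) ^ 2))
      (3 * (U x t) ^ 2 * v x) x := by
    intro x
    have hvx : HasDerivAt v (deriv v x) x := (hv.differentiable (by simp) x).hasDerivAt
    refine ((((hvx.pow 2).const_mul μ).sub ((hV x).pow 2)).const_mul 3).congr_deriv ?_
    norm_num
    ring
  have hlim : ∀ l : Filter ℝ, Tendsto (fun x => U x t) l (nhds 0) → Tendsto v l (nhds 0) →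
      Tendsto (deriv v) l (nhds 0) →
      Tendsto (fun x => 3 * (μ * v x ^ 2 - (-(U x t) ^ 2 / 2 + μ * deriv v x) ^ 2)) l
        (nhds 0) := by
    intro l h₀ h₁ h₂
    simpa using (((h₁.pow 2).const_mul μ).sub
      ((((h₀.pow 2).neg.div_const 2).add (h₂.const_mul μ)).pow 2)).const_mul 3
  have hint : Integrable (fun x => 3 * (U x t) ^ 2 * v x) := by
    simpa only [mul_assoc] using hint₃.const_mul 3
  simpa using integral_of_hasDerivAt_of_tendsto hW hint
    (hlim _ hUBot hUtBot hUxtBot) (hlim _ hUTop hUtTop hUxtTop)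
end

section
/- Let μ ∈ ℝ, U₀ ∈ ℝ, and let U : ℝ × ℝ → ℝ be a smooth solution of the EW equation ∂ₜU + U·∂ₓU − μ·∂ₓ∂ₓ∂ₜU = 0. Fix t ∈ ℝ and assume that x ↦ 2U(x,t)·∂ₜU(x,t) + 2μ·∂ₓU(x,t)·∂ₓ∂ₜU(x,t) is integrable on ℝ, that U(x,t) → U₀ as x → −∞ and U(x,t) → 0 as x → +∞, and that U(x,t)·∂ₓ∂ₜU(x,t) → 0 as x → ±∞. Then ∫_{−∞}^{∞} ∂ₜ( U² + μ·(∂ₓU)² )(x,t) dx = (2/3)·U₀³; that is, in the undular bore setting the second invariant I₂ increases at the constant rate M₂ = (2/3)U₀³. -/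
open Real MeasureTheory Filter

/-- The partial derivative in the first variable, as a value of the Fréchet derivative. -/
lemma hasDerivAt_fst_slice {F : Type*} [NormedAddCommGroup F] [NormedSpace ℝ F]
    {g : ℝ × ℝ → F} (hg : Differentiable ℝ g) (x t : ℝ) :
    HasDerivAt (fun y => g (y, t)) (fderiv ℝ g (x, t) (1, 0)) x :=
  (hg (x, t)).hasFDerivAt.comp_hasDerivAt x ((hasDerivAt_id x).prodMk (hasDerivAt_const x t))

/-- The partial derivative in the second variable, as a value of the Fréchet derivative. -/
lemma hasDerivAt_snd_slice {F : Type*} [NormedAddCommGroup F] [NormedSpace ℝ F]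
    {g : ℝ × ℝ → F} (hg : Differentiable ℝ g) (x t : ℝ) :
    HasDerivAt (fun s => g (x, s)) (fderiv ℝ g (x, t) (0, 1)) t :=
  (hg (x, t)).hasFDerivAt.comp_hasDerivAt t ((hasDerivAt_const t x).prodMk (hasDerivAt_id t))

/-- Equality of mixed partial derivatives of a smooth function of two real variables. -/
lemma hasDerivAt_deriv_fst_slice {g : ℝ × ℝ → ℝ} (hg : ContDiff ℝ (⊤ : ℕ∞) g) (x t : ℝ) :
    HasDerivAt (fun s => deriv (fun y => g (y, s)) x)
      (deriv (fun z => deriv (fun s => g (z, s)) t) x) t := by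
  have hd : Differentiable ℝ g := hg.differentiable (by simp)
  have hd' : Differentiable ℝ (fderiv ℝ g) :=
    (hg.fderiv_right (m := (⊤ : ℕ∞)) le_rfl).differentiable (by simp)
  have hsymm : IsSymmSndFDerivAt ℝ g (x, t) :=
    (contDiff_infty.1 hg 2).contDiffAt.isSymmSndFDerivAt (by simp)
  simp only [fun s => (hasDerivAt_fst_slice hd x s).deriv,
    fun z => (hasDerivAt_snd_slice hd z t).deriv]
  have h₁ := (hasDerivAt_snd_slice hd' x t).clm_apply (hasDerivAt_const t ((1, 0) : ℝ × ℝ))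
  have h₂ := (hasDerivAt_fst_slice hd' x t).clm_apply (hasDerivAt_const x ((0, 1) : ℝ × ℝ))
  rw [h₂.deriv]
  refine h₁.congr_deriv ?_
  simpa using hsymm.eq (0, 1) (1, 0)

/-- In the undular bore setting, the second invariant `I₂ = ∫ (U² + μ·Uₓ²) dx` of the
EW equation increases at the constant rate `M₂ = (2/3)U₀³`. -/
theorem ew_undular_bore_second_invariant_rate
    (μ U₀ : ℝ) (U : ℝ → ℝ → ℝ)
    (hreg : ContDiff ℝ (⊤ : ℕ∞) (fun p : ℝ × ℝ => U p.1 p.2))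
    (hEW : ∀ x t : ℝ,
      deriv (fun s => U x s) t
        + U x t * deriv (fun y => U y t) x
        - μ * deriv (fun y => deriv (fun z => deriv (fun s => U z s) t) y) x = 0)
    (t : ℝ)
    (hint : Integrable (fun x =>
      2 * U x t * deriv (fun s => U x s) t
        + 2 * μ * deriv (fun y => U y t) x * deriv (fun z => deriv (fun s => U z s) t) x))
    (hUBot : Tendsto (fun x => U x t) atBot (nhds U₀))
    (hUTop : Tendsto (fun x => U x t) atTop (nhds 0))
    (hUUxtTop : Tendsto (fun x => U x t * deriv (fun z => deriv (fun s => U z s) t) x)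
      atTop (nhds 0))
    (hUUxtBot : Tendsto (fun x => U x t * deriv (fun z => deriv (fun s => U z s) t) x)
      atBot (nhds 0)) :
    ∫ x : ℝ, deriv (fun s => (U x s) ^ 2 + μ * (deriv (fun y => U y s) x) ^ 2) t
      = (2 / 3) * U₀ ^ 3 := by
  set g : ℝ × ℝ → ℝ := fun p => U p.1 p.2 with hg
  have hd : Differentiable ℝ g := hreg.differentiable (by simp)
  have hUx : ∀ x, HasDerivAt (fun y => U y t) (deriv (fun y => U y t) x) x := fun x =>
    (hasDerivAt_fst_slice hd x t).differentiableAt.hasDerivAt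
  have hUt : ∀ x, HasDerivAt (fun s => U x s) (deriv (fun s => U x s) t) t := fun x =>
    (hasDerivAt_snd_slice hd x t).differentiableAt.hasDerivAt
  have hUt_smooth : ContDiff ℝ (1 + 1) (fun z => deriv (fun s => U z s) t) := by
    have h : (fun z => deriv (fun s => U z s) t) = fun z => fderiv ℝ g (z, t) (0, 1) :=
      funext fun z => (hasDerivAt_snd_slice hd z t).deriv
    rw [h]
    have h' : ContDiff ℝ (1 + 1) (fderiv ℝ g) :=
      (contDiff_infty.1 hreg 3).fderiv_right (by norm_num)
    exact (h'.comp (contDiff_id.prodMk contDiff_const)).clm_apply contDiff_const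
  have hUxt : ∀ x, HasDerivAt (deriv (fun z => deriv (fun s => U z s) t))
      (deriv (deriv (fun z => deriv (fun s => U z s) t)) x) x := fun x =>
    (hUt_smooth.deriv'.differentiable (by simp) x).hasDerivAt
  have hdensity : ∀ x, deriv (fun s => (U x s) ^ 2 + μ * (deriv (fun y => U y s) x) ^ 2) t
      = 2 * U x t * deriv (fun s => U x s) t
        + 2 * μ * deriv (fun y => U y t) x * deriv (fun z => deriv (fun s => U z s) t) x := by
    intro x
    have h := ((hUt x).fun_pow 2).fun_add
      (((hasDerivAt_deriv_fst_slice hreg x t).fun_pow 2).const_mul μ)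
    rw [h.deriv]
    simp only [hg]
    push_cast
    ring
  simp only [hdensity]
  have hflux : ∀ x, HasDerivAt
      (fun x => 2 * μ * (U x t * deriv (fun z => deriv (fun s => U z s) t) x)
        - 2 / 3 * U x t ^ 3)
      (2 * U x t * deriv (fun s => U x s) t
        + 2 * μ * deriv (fun y => U y t) x * deriv (fun z => deriv (fun s => U z s) t) x) x := by
    intro x
    refine ((((hUx x).fun_mul (hUxt x)).const_mul (2 * μ)).fun_sub
      (((hUx x).fun_pow 3).const_mul (2 / 3))).congr_deriv ?_
    push_cast
    linear_combination (-2 * U x t) * hEW x t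
  rw [integral_of_hasDerivAt_of_tendsto hflux hint
    ((hUUxtBot.const_mul (2 * μ)).sub ((hUBot.pow 3).const_mul (2 / 3)))
    ((hUUxtTop.const_mul (2 * μ)).sub ((hUTop.pow 3).const_mul (2 / 3)))]
  ring
end

section
/- Let U : ℝ × ℝ → ℝ be continuously differentiable in t with ∂ₓU also continuously differentiable in t, and suppose there are constants M₁, M₂ ≥ 0 with |∂ₜU(x,t)| ≤ M₁ and |∂ₜ∂ₓU(x,t)| ≤ M₂ for all (x,t). Fix x ∈ ℝ, a time level tₙ and a step Δt > 0, and write V = U(x, tₙ + Δt), Vₓ = ∂ₓU(x, tₙ + Δt), W = U(x, tₙ), Wₓ = ∂ₓU(x, tₙ). Then the Rubin–Graves linearization error satisfies V·Vₓ − ( Vₓ·W + V·Wₓ − Wₓ·W ) = (V − W)·(Vₓ − Wₓ), and hence | V·Vₓ − ( Vₓ·W + V·Wₓ − Wₓ·W ) | ≤ M₁·M₂·Δt²; that is, the Rubin–Graves linearization of the nonlinear term (U·Uₓ)^{n+1} is second-order accurate in Δt. -/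
open Real

/-- Mean value inequality over a time step: if `|deriv f| ≤ C` everywhere, then `f` changes by at most
`C * h` over a step of length `h ≥ 0`. -/
theorem abs_step_sub_le_of_abs_deriv_le {f : ℝ → ℝ} {C : ℝ} (hf : Differentiable ℝ f)
    (hC : ∀ t, |deriv f t| ≤ C) (t : ℝ) {h : ℝ} (hh : 0 ≤ h) :
    |f (t + h) - f t| ≤ C * h := by
  simpa [Real.norm_eq_abs, abs_of_nonneg hh] using
    convex_univ.norm_image_sub_le_of_norm_deriv_le (fun s _ => hf s) (fun s _ => hC s)
      (Set.mem_univ t) (Set.mem_univ (t + h))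

/-- The Rubin–Graves linearization of the nonlinear term `(U·Uₓ)^{n+1}` is second-order
accurate in `Δt`: the linearization error equals `(V − W)·(Vₓ − Wₓ)` and is bounded by
`M₁·M₂·Δt²`. -/
theorem rubin_graves_linearization_second_order
    (U : ℝ → ℝ → ℝ) (M₁ M₂ : ℝ) (hM₁ : 0 ≤ M₁) (hM₂ : 0 ≤ M₂)
    (hreg₁ : ∀ x : ℝ, ContDiff ℝ 1 (fun s => U x s))
    (hreg₂ : ∀ x : ℝ, ContDiff ℝ 1 (fun s => deriv (fun y => U y s) x))
    (hb₁ : ∀ x t : ℝ, |deriv (fun s => U x s) t| ≤ M₁)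
    (hb₂ : ∀ x t : ℝ, |deriv (fun s => deriv (fun y => U y s) x) t| ≤ M₂)
    (x tn Δt : ℝ) (hΔt : 0 < Δt)
    (V Vx W Wx : ℝ)
    (hV : V = U x (tn + Δt)) (hVx : Vx = deriv (fun y => U y (tn + Δt)) x)
    (hW : W = U x tn) (hWx : Wx = deriv (fun y => U y tn) x) :
    V * Vx - (Vx * W + V * Wx - Wx * W) = (V - W) * (Vx - Wx) ∧
    |V * Vx - (Vx * W + V * Wx - Wx * W)| ≤ M₁ * M₂ * Δt ^ 2 := by
  have error_eq : V * Vx - (Vx * W + V * Wx - Wx * W) = (V - W) * (Vx - Wx) := by ring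
  refine ⟨error_eq, ?_⟩
  have hU : |V - W| ≤ M₁ * Δt := by
    rw [hV, hW]
    exact abs_step_sub_le_of_abs_deriv_le ((hreg₁ x).differentiable one_ne_zero) (hb₁ x) tn hΔt.le
  have hUx : |Vx - Wx| ≤ M₂ * Δt := by
    rw [hVx, hWx]
    exact abs_step_sub_le_of_abs_deriv_le ((hreg₂ x).differentiable one_ne_zero) (hb₂ x) tn hΔt.le
  calc |V * Vx - (Vx * W + V * Wx - Wx * W)| = |V - W| * |Vx - Wx| := by rw [error_eq, abs_mul]
    _ ≤ (M₁ * Δt) * (M₂ * Δt) := by gcongr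
    _ = M₁ * M₂ * Δt ^ 2 := by ring
end
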